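/- Let H be a real inner product space, V a linear subspace of H equipped with a norm ‖·‖_V, and B : V × V → H a bilinear map such that for all u, v ∈ V: (i) ⟨B(u,v), v⟩ = 0, and (ii) ⟨B(u,v), u⟩ ≤ C ‖u‖_H ‖u‖_V ‖v‖_V for a fixed constant C ≥ 0, where ‖·‖_H is the inner-product norm of H. Then for all u, v ∈ V the local monotonicity estimate holds: ⟨B(u,u) − B(v,v), u − v⟩ ≤ C ‖u−v‖_H ‖u−v‖_V ‖v‖_V. -/

import Mathlib

open scoped InnerProductSpace

section

variable {R M N : Type*} [CommSemiring R] [AddCommGroup M] [Module R M]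
  [AddCommGroup N] [Module R N]

theorem bilin_self_sub_bilin_self (B : M →ₗ[R] M →ₗ[R] N) (u v : M) :
    B u u - B v v = B u (u - v) + B (u - v) v := by
  rw [map_sub, LinearMap.map_sub₂, sub_add_sub_cancel]

end

section

variable {H V : Type*} [SeminormedAddCommGroup H] [InnerProductSpace ℝ H]
  [AddCommGroup V] [Module ℝ V] (ι : V →ₗ[ℝ] H) (B : V →ₗ[ℝ] V →ₗ[ℝ] H)

theorem inner_bilin_self_sub_bilin_self (hB0 : ∀ u v : V, ⟪B u v, ι v⟫_ℝ = 0) (u v : V) :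
    ⟪B u u - B v v, ι u - ι v⟫_ℝ = ⟪B (u - v) v, ι (u - v)⟫_ℝ := by
  rw [← map_sub, bilin_self_sub_bilin_self, inner_add_left, hB0, zero_add]

theorem stmt1_general (Φ : V → V → ℝ) (hB0 : ∀ u v : V, ⟪B u v, ι v⟫_ℝ = 0)
    (hB1 : ∀ u v : V, ⟪B u v, ι u⟫_ℝ ≤ Φ u v) (u v : V) :
    ⟪B u u - B v v, ι u - ι v⟫_ℝ ≤ Φ (u - v) v :=
  (inner_bilin_self_sub_bilin_self ι B hB0 u v).trans_le (hB1 (u - v) v)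

end

/-- Local monotonicity estimate (2.4) for the abstract bilinear convection term `B`:
`V` is a linear subspace of `H` (realized as an injective linear map `ι : V →ₗ[ℝ] H`)
equipped with its own norm; if `⟨B(u,v), v⟩ = 0` and
`⟨B(u,v), u⟩ ≤ C ‖u‖_H ‖u‖_V ‖v‖_V`, then
`⟨B(u,u) − B(v,v), u − v⟩ ≤ C ‖u−v‖_H ‖u−v‖_V ‖v‖_V`. -/
theorem stmt1 {H V : Type*} [NormedAddCommGroup H] [InnerProductSpace ℝ H]
    [NormedAddCommGroup V] [NormedSpace ℝ V]
    (ι : V →ₗ[ℝ] H) (hι : Function.Injective ι)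
    (B : V →ₗ[ℝ] V →ₗ[ℝ] H) (C : ℝ) (hC : 0 ≤ C)
    (hB0 : ∀ u v : V, ⟪B u v, ι v⟫_ℝ = 0)
    (hB1 : ∀ u v : V, ⟪B u v, ι u⟫_ℝ ≤ C * ‖ι u‖ * ‖u‖ * ‖v‖)
    (u v : V) :
    ⟪B u u - B v v, ι u - ι v⟫_ℝ ≤ C * ‖ι (u - v)‖ * ‖u - v‖ * ‖v‖ :=
  stmt1_general ι B (fun u v ↦ C * ‖ι u‖ * ‖u‖ * ‖v‖) hB0 hB1 u v
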